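/- The set { a ∈ H₀ : ∫_{Σ_A} a dμ = 0 and ‖D(a·h) − a·D(h)‖_{L²(μ)} ≤ ‖h‖_{L²(μ)} for all h ∈ H₀ } is totally bounded in the supremum norm on Σ_A. -/

import Mathlib

open MeasureTheory Filter
open scoped ENNReal NNReal

namespace SFT

variable {l : ℕ}

/-- The one-sided subshift of finite type determined by the `l × l` matrix `A`:
infinite sequences with transitions allowed by `A`. -/
abbrev SigmaA (l : ℕ) (A : Matrix (Fin l) (Fin l) ℕ) : Type :=
  {ω : ℕ → Fin l // ∀ k, A (ω k) (ω (k + 1)) = 1}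

/-- The left shift `σ` on `SigmaA l A`. -/
def shift {A : Matrix (Fin l) (Fin l) ℕ} (ω : SigmaA l A) : SigmaA l A :=
  ⟨fun n => ω.1 (n + 1), fun k => ω.2 (k + 1)⟩

/-- Birkhoff sums `S_k φ = ∑_{m<k} φ ∘ σ^m`. -/
def birkhoff {A : Matrix (Fin l) (Fin l) ℕ} (φ : SigmaA l A → ℝ) (k : ℕ) (ω : SigmaA l A) : ℝ :=
  ∑ m ∈ Finset.range k, φ (shift^[m] ω)

/-- The matrix `A` has `0`-`1` entries and is irreducible and aperiodic
(some power of `A` has all entries strictly positive). -/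
def Primitive (A : Matrix (Fin l) (Fin l) ℕ) : Prop :=
  (∀ i j, A i j = 0 ∨ A i j = 1) ∧ ∃ n : ℕ, 0 < n ∧ ∀ i j, 0 < (A ^ n) i j

/-- A finite word is admissible, i.e. belongs to `Σ_A^*`. -/
def Admissible (A : Matrix (Fin l) (Fin l) ℕ) (x : List (Fin l)) : Prop :=
  x ≠ [] ∧ ∀ (i : ℕ) (h : i + 1 < x.length), A (x[i]'(by omega)) (x[i + 1]'h) = 1

/-- The cylinder set `[x]` of a finite word (the empty word gives all of `Σ_A`). -/
def cylinder (A : Matrix (Fin l) (Fin l) ℕ) (x : List (Fin l)) : Set (SigmaA l A) :=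
  {ω | ∀ (i : ℕ) (h : i < x.length), ω.1 i = x[i]'h}

/-- The initial word `(ω_1, …, ω_k)` of `ω`. -/
def wordPrefix {A : Matrix (Fin l) (Fin l) ℕ} (ω : SigmaA l A) (k : ℕ) : List (Fin l) :=
  List.ofFn (fun i : Fin k => ω.1 i)

/-- `μ` is a Gibbs measure for the potential `φ` with pressure `P`:
`c⁻¹ ≤ μ([ω_1,…,ω_k]) / exp(S_kφ(ω) − kP) ≤ c` for some `c > 1`. -/
def IsGibbs {A : Matrix (Fin l) (Fin l) ℕ} (φ : SigmaA l A → ℝ) (P : ℝ)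
    (μ : Measure (SigmaA l A)) : Prop :=
  ∃ c : ℝ, 1 < c ∧ ∀ (ω : SigmaA l A) (k : ℕ), 0 < k →
    c⁻¹ ≤ (μ (cylinder A (wordPrefix ω k))).toReal / Real.exp (birkhoff φ k ω - k * P) ∧
      (μ (cylinder A (wordPrefix ω k))).toReal / Real.exp (birkhoff φ k ω - k * P) ≤ c

/-- `φ` is Hölder continuous with respect to the metric `d(ω,υ) = 2^{-(ω ∧ υ)}`:
there are `C` and an exponent `s > 0` with `|φ(ω) − φ(υ)| ≤ C ⬝ d(ω,υ)^s`, i.e.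
`|φ(ω) − φ(υ)| ≤ C ⬝ 2^{-sn}` whenever `ω` and `υ` agree in their first `n` coordinates. -/
def HolderCont {A : Matrix (Fin l) (Fin l) ℕ} (φ : SigmaA l A → ℝ) : Prop :=
  ∃ C s : ℝ, 0 < s ∧ ∀ (ω υ : SigmaA l A) (n : ℕ),
    (∀ i < n, ω.1 i = υ.1 i) → |φ ω - φ υ| ≤ C * (2 : ℝ) ^ (-(s * n))

/-- `α(x)`: the number of children of the word `x` (the row sum of `A` at the
last letter of `x`). -/
def alpha (A : Matrix (Fin l) (Fin l) ℕ) (x : List (Fin l)) : ℕ :=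
  match x.getLast? with
  | some a => ∑ i, A a i
  | none => 0

/-- The `m`-th child `x θ_x⁻¹(m)` of the word `x`, the ordering of the children
being given by `θinv x`. -/
def child (θinv : List (Fin l) → ℕ → Fin l) (x : List (Fin l)) (m : ℕ) : List (Fin l) :=
  x ++ [θinv x m]

/-- The characteristic function of the cylinder `[x]`, as a function on `Σ_A`. -/
noncomputable def indC (A : Matrix (Fin l) (Fin l) ℕ) (x : List (Fin l)) : SigmaA l A → ℂ :=
  (cylinder A x).indicator 1

/-- The `L²(μ)` inner product of two functions (conjugate linear in the first slot). -/
noncomputable def innerMu (A : Matrix (Fin l) (Fin l) ℕ) (μ : Measure (SigmaA l A))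
    (f g : SigmaA l A → ℂ) : ℂ :=
  ∫ ω, (starRingEnd ℂ) (f ω) * g ω ∂μ

/-- The Haar function `e_{x,j} = ∑_m μ([xθ_x⁻¹(m)])^{-1/2} ⟨f_{x,m}, U_x f_{x,j}⟩_x χ_{[xθ_x⁻¹(m)]}`
as a function on `Σ_A`; here `u x m j = ⟨f_{x,m}, U_x f_{x,j}⟩_x` are the matrix
coefficients of `U_x` in the orthonormal basis `(f_{x,m})_m`. -/
noncomputable def haarFun (A : Matrix (Fin l) (Fin l) ℕ) (μ : Measure (SigmaA l A))
    (θinv : List (Fin l) → ℕ → Fin l) (u : List (Fin l) → ℕ → ℕ → ℝ)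
    (x : List (Fin l)) (j : ℕ) : SigmaA l A → ℂ := fun ω =>
  ∑ m ∈ Finset.range (alpha A x),
    ((((Real.sqrt ((μ (cylinder A (child θinv x m))).toReal))⁻¹ * u x m j : ℝ) : ℂ)) *
      indC A (child θinv x m) ω

/-- `H₀`: the complex linear span of the characteristic functions of cylinder sets
of admissible words, together with `χ_{Σ_A}` (the cylinder of the empty word). -/
noncomputable def H0 (A : Matrix (Fin l) (Fin l) ℕ) : Submodule ℂ (SigmaA l A → ℂ) :=
  Submodule.span ℂ {f | ∃ x : List (Fin l), (x = [] ∨ Admissible A x) ∧ f = indC A x}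

/-- The operator `D` (the Dirac operator on the dense domain `H₀`, extended to all
functions by the same formula; on `H₀` all but finitely many summands vanish). -/
noncomputable def Dop (A : Matrix (Fin l) (Fin l) ℕ) (μ : Measure (SigmaA l A))
    (θinv : List (Fin l) → ℕ → Fin l) (u : List (Fin l) → ℕ → ℕ → ℝ)
    (h : SigmaA l A → ℂ) : SigmaA l A → ℂ := fun ω =>
  (∑ a : Fin l,
      (((μ (cylinder A [a])).toReal : ℂ))⁻¹ * innerMu A μ (indC A [a]) h * indC A [a] ω)
    - innerMu A μ (indC A []) h * indC A [] ω
    + ∑' y : List (Fin l),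
        Set.indicator {y : List (Fin l) | Admissible A y}
          (fun y => ((((alpha A y : ℝ) - 1) / (μ (cylinder A y)).toReal : ℝ) : ℂ) *
            ∑ j ∈ Finset.range (alpha A y - 1),
              innerMu A μ (haarFun A μ θinv u y j) h * haarFun A μ θinv u y j ω) y

section Cylinders

variable {A : Matrix (Fin l) (Fin l) ℕ}

lemma length_wordPrefix (ω : SigmaA l A) (k : ℕ) : (wordPrefix ω k).length = k := by
  simp [wordPrefix]

lemma mem_cylinder_wordPrefix {ω υ : SigmaA l A} {k : ℕ} :
    υ ∈ cylinder A (wordPrefix ω k) ↔ ∀ i < k, υ.1 i = ω.1 i := by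
  simp [cylinder, wordPrefix]

lemma self_mem_cylinder (ω : SigmaA l A) (k : ℕ) : ω ∈ cylinder A (wordPrefix ω k) :=
  mem_cylinder_wordPrefix.2 fun _ _ => rfl

lemma wordPrefix_eq_of_mem {ω : SigmaA l A} {x : List (Fin l)} (h : ω ∈ cylinder A x) :
    wordPrefix ω x.length = x := by
  apply List.ext_getElem (by simp [wordPrefix])
  intro i h₁ h₂
  simpa [wordPrefix] using h i h₂

lemma wordPrefix_congr {ω υ : SigmaA l A} {k : ℕ} (h : ∀ i < k, υ.1 i = ω.1 i) :
    wordPrefix υ k = wordPrefix ω k := by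
  simpa [length_wordPrefix] using wordPrefix_eq_of_mem (mem_cylinder_wordPrefix.2 h)

lemma wordPrefix_succ (ω : SigmaA l A) (k : ℕ) :
    wordPrefix ω (k + 1) = wordPrefix ω k ++ [ω.1 k] := by
  rw [wordPrefix, List.ofFn_succ_last]
  rfl

lemma wordPrefix_zero (ω : SigmaA l A) : wordPrefix ω 0 = [] := by
  simp [wordPrefix]

lemma cylinder_nil : cylinder A [] = Set.univ := by
  ext; simp [cylinder]

lemma mem_cylinder_append {ω : SigmaA l A} {x : List (Fin l)} {b : Fin l} :
    ω ∈ cylinder A (x ++ [b]) ↔ ω ∈ cylinder A x ∧ ω.1 x.length = b := by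
  constructor
  · intro h
    refine ⟨fun i hi => ?_, ?_⟩
    · have := h i (by simp; omega)
      rwa [List.getElem_append_left hi] at this
    · simpa using h x.length (by simp)
  · rintro ⟨h, hb⟩ i hi
    rcases Nat.lt_or_ge i x.length with h' | h'
    · rw [List.getElem_append_left h']; exact h i h'
    · have : i = x.length := by simp at hi; omega
      subst this
      simpa using hb

lemma cylinder_wordPrefix_subset (ω : SigmaA l A) {j k : ℕ} (h : j ≤ k) :
    cylinder A (wordPrefix ω k) ⊆ cylinder A (wordPrefix ω j) := fun _ hυ =>
  mem_cylinder_wordPrefix.2 fun i hi => mem_cylinder_wordPrefix.1 hυ i (hi.trans_le h)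

lemma measurableSet_cylinder (x : List (Fin l)) : MeasurableSet (cylinder A x) := by
  have : cylinder A x = ⋂ i : Fin x.length, {ω : SigmaA l A | ω.1 i = x[i]} := by
    ext ω
    simp [cylinder, Fin.forall_iff]
  rw [this]
  refine MeasurableSet.iInter fun i => ?_
  exact ((measurable_pi_apply (i : ℕ)).comp measurable_subtype_coe) (measurableSet_singleton _)

lemma cylinder_eq_iUnion (x : List (Fin l)) :
    cylinder A x = ⋃ b : Fin l, cylinder A (x ++ [b]) := by
  ext ω
  simp [mem_cylinder_append]

lemma pairwise_disjoint_cylinder_append (x : List (Fin l)) :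
    Pairwise (Function.onFun Disjoint fun b : Fin l => cylinder A (x ++ [b])) := by
  intro b b' hb
  refine Set.disjoint_left.2 fun ω h h' => hb ?_
  rw [← (mem_cylinder_append.1 h).2, ← (mem_cylinder_append.1 h').2]

lemma setIntegral_cylinder_eq_sum {μ : Measure (SigmaA l A)} {f : SigmaA l A → ℂ}
    (hf : Integrable f μ) (x : List (Fin l)) :
    ∫ ω in cylinder A x, f ω ∂μ = ∑ b : Fin l, ∫ ω in cylinder A (x ++ [b]), f ω ∂μ := by
  rw [cylinder_eq_iUnion, integral_iUnion_fintype (fun b => measurableSet_cylinder _)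
    (pairwise_disjoint_cylinder_append x) fun b => hf.integrableOn]

lemma admissible_wordPrefix_succ (ω : SigmaA l A) (k : ℕ) :
    Admissible A (wordPrefix ω (k + 1)) := by
  refine ⟨by simp [wordPrefix], fun i h => ?_⟩
  simpa only [wordPrefix, List.getElem_ofFn] using ω.2 i

lemma getLast_of_mem {ω : SigmaA l A} {x : List (Fin l)} (hx : x ≠ [])
    (h : ω ∈ cylinder A x) : x.getLast hx = ω.1 (x.length - 1) := by
  have hpos := List.length_pos_iff.2 hx
  rw [List.getLast_eq_getElem, h _ (by omega)]

/-- A function depends only on the first `n` letters. -/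
def LocConst {E : Type*} (n : ℕ) (f : SigmaA l A → E) : Prop :=
  ∀ ω υ : SigmaA l A, (∀ i < n, ω.1 i = υ.1 i) → f ω = f υ

lemma LocConst.mono {E : Type*} {n n' : ℕ} {f : SigmaA l A → E} (hf : LocConst n f)
    (h : n ≤ n') : LocConst n' f :=
  fun ω υ hωυ => hf ω υ fun i hi => hωυ i (hi.trans_le h)

lemma LocConst.finite_range {E : Type*} {n : ℕ} {f : SigmaA l A → E} (hf : LocConst n f) :
    (Set.range f).Finite := by
  have h : Set.range f ⊆ ⋃ w : Fin n → Fin l,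
      f '' {ω : SigmaA l A | ∀ i : Fin n, ω.1 i = w i} := by
    rintro _ ⟨ω, rfl⟩
    exact Set.mem_iUnion.2 ⟨fun i => ω.1 i, ω, fun _ => rfl, rfl⟩
  refine (Set.finite_iUnion fun w => Set.Subsingleton.finite ?_).subset h
  rintro _ ⟨ω, hω, rfl⟩ _ ⟨υ, hυ, rfl⟩
  exact hf ω υ fun i hi => (hω ⟨i, hi⟩).trans (hυ ⟨i, hi⟩).symm

lemma LocConst.measurable {E : Type*} [MeasurableSpace E] {n : ℕ} {f : SigmaA l A → E}
    (hf : LocConst n f) : Measurable f := by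
  intro s _
  let r : SigmaA l A → (Fin n → Fin l) := fun ω i => ω.1 i
  have hr : Measurable r := measurable_pi_lambda _ fun i =>
    (measurable_pi_apply (i : ℕ)).comp measurable_subtype_coe
  have : f ⁻¹' s = r ⁻¹' (r '' (f ⁻¹' s)) := by
    refine (Set.subset_preimage_image _ _).antisymm ?_
    rintro ω ⟨υ, hυ, h⟩
    have : f υ = f ω := hf υ ω fun i hi => congrFun h ⟨i, hi⟩
    simpa [← this] using hυ
  rw [this]
  exact hr (Set.toFinite _).measurableSet

lemma LocConst.exists_bound {n : ℕ} {f : SigmaA l A → ℂ} (hf : LocConst n f) :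
    ∃ C : ℝ, ∀ ω, ‖f ω‖ ≤ C := by
  obtain ⟨C, hC⟩ := hf.finite_range.isBounded.exists_norm_le
  exact ⟨C, fun ω => hC _ ⟨ω, rfl⟩⟩

lemma LocConst.memLp {μ : Measure (SigmaA l A)} [IsFiniteMeasure μ] {n : ℕ}
    {f : SigmaA l A → ℂ} (hf : LocConst n f) (p : ℝ≥0∞) : MemLp f p μ := by
  obtain ⟨C, hC⟩ := hf.exists_bound
  exact MemLp.of_bound hf.measurable.aestronglyMeasurable C (Eventually.of_forall hC)

lemma LocConst.integrable {μ : Measure (SigmaA l A)} [IsFiniteMeasure μ] {n : ℕ}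
    {f : SigmaA l A → ℂ} (hf : LocConst n f) : Integrable f μ :=
  memLp_one_iff_integrable.1 (hf.memLp 1)

lemma indC_of_mem {x : List (Fin l)} {ω : SigmaA l A} (h : ω ∈ cylinder A x) :
    indC A x ω = 1 := by
  simp [indC, h]

lemma indC_of_notMem {x : List (Fin l)} {ω : SigmaA l A} (h : ω ∉ cylinder A x) :
    indC A x ω = 0 := by
  simp [indC, h]

lemma indC_nil : indC A [] = 1 := by
  funext ω
  exact indC_of_mem (by simp [cylinder_nil])

lemma locConst_indC (x : List (Fin l)) : LocConst x.length (indC A x) := by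
  intro ω υ h
  have : ω ∈ cylinder A x ↔ υ ∈ cylinder A x :=
    forall₂_congr fun i hi => by rw [h i hi]
  by_cases hω : ω ∈ cylinder A x
  · rw [indC_of_mem hω, indC_of_mem (this.1 hω)]
  · rw [indC_of_notMem hω, indC_of_notMem (mt this.2 hω)]

lemma exists_locConst_of_mem_H0 {a : SigmaA l A → ℂ} (ha : a ∈ H0 A) :
    ∃ n, LocConst n a := by
  induction ha using Submodule.span_induction with
  | mem f hf =>
    obtain ⟨x, -, rfl⟩ := hf
    exact ⟨_, locConst_indC x⟩
  | zero => exact ⟨0, fun _ _ _ => rfl⟩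
  | add f g _ _ hf hg =>
    obtain ⟨n, hn⟩ := hf
    obtain ⟨m, hm⟩ := hg
    refine ⟨max n m, fun ω υ h => ?_⟩
    simp [hn.mono (le_max_left n m) ω υ h, hm.mono (le_max_right n m) ω υ h]
  | smul c f _ hf =>
    obtain ⟨n, hn⟩ := hf
    exact ⟨n, fun ω υ h => by simp [hn ω υ h]⟩

lemma innerMu_indC {μ : Measure (SigmaA l A)} (x : List (Fin l)) (f : SigmaA l A → ℂ) :
    innerMu A μ (indC A x) f = ∫ ω in cylinder A x, f ω ∂μ := by
  rw [innerMu, ← integral_indicator (measurableSet_cylinder x)]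
  refine integral_congr_ae (Eventually.of_forall fun ω => ?_)
  by_cases h : ω ∈ cylinder A x <;> simp [indC, h]

/-- The average of `f` over the cylinder of length `k` around `ω`, i.e. the conditional
expectation of `f` given the first `k` letters. -/
noncomputable def cylAvg (μ : Measure (SigmaA l A)) (k : ℕ) (f : SigmaA l A → ℂ)
    (ω : SigmaA l A) : ℂ :=
  ((μ.real (cylinder A (wordPrefix ω k)) : ℝ) : ℂ)⁻¹ *
    ∫ υ in cylinder A (wordPrefix ω k), f υ ∂μ

lemma locConst_cylAvg (μ : Measure (SigmaA l A)) (k : ℕ) (f : SigmaA l A → ℂ) :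
    LocConst k (cylAvg μ k f) := fun ω υ h => by
  rw [cylAvg, cylAvg, wordPrefix_congr h]

lemma setIntegral_cylinder_of_locConst {μ : Measure (SigmaA l A)} {k : ℕ}
    {f : SigmaA l A → ℂ} (ω : SigmaA l A)
    (hf : ∀ υ ∈ cylinder A (wordPrefix ω k), f υ = f ω) :
    ∫ υ in cylinder A (wordPrefix ω k), f υ ∂μ
      = (μ.real (cylinder A (wordPrefix ω k)) : ℂ) * f ω := by
  rw [setIntegral_congr_fun (measurableSet_cylinder _) hf, setIntegral_const]
  simp

lemma cylAvg_eq_self {μ : Measure (SigmaA l A)} {k : ℕ} {f : SigmaA l A → ℂ}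
    (hf : LocConst k f) {ω : SigmaA l A} (hω : μ.real (cylinder A (wordPrefix ω k)) ≠ 0) :
    cylAvg μ k f ω = f ω := by
  rw [cylAvg, setIntegral_cylinder_of_locConst ω fun υ hυ =>
    hf υ ω (mem_cylinder_wordPrefix.1 hυ)]
  exact inv_mul_cancel_left₀ (by exact_mod_cast hω) _

lemma cylAvg_mul {μ : Measure (SigmaA l A)} {k : ℕ} {c f : SigmaA l A → ℂ}
    (hc : LocConst k c) (ω : SigmaA l A) :
    cylAvg μ k (fun υ => c υ * f υ) ω = c ω * cylAvg μ k f ω := by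
  have : ∫ υ in cylinder A (wordPrefix ω k), c υ * f υ ∂μ
      = ∫ υ in cylinder A (wordPrefix ω k), c ω * f υ ∂μ :=
    setIntegral_congr_fun (measurableSet_cylinder _) fun υ hυ => by
      simp only [hc υ ω (mem_cylinder_wordPrefix.1 hυ)]
  rw [cylAvg, this, integral_const_mul, cylAvg]
  ring

lemma setIntegral_cylAvg {μ : Measure (SigmaA l A)} [IsFiniteMeasure μ] {k : ℕ}
    {f : SigmaA l A → ℂ} (hf : Integrable f μ) {x : List (Fin l)} (hx : x.length ≤ k) :
    ∫ ω in cylinder A x, cylAvg μ k f ω ∂μ = ∫ ω in cylinder A x, f ω ∂μ := by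
  obtain ⟨d, hd⟩ := Nat.exists_eq_add_of_le hx
  induction d generalizing x with
  | zero =>
    have hk : x.length = k := by omega
    rcases eq_or_ne (μ (cylinder A x)) 0 with h0 | h0
    · rw [setIntegral_measure_zero _ h0, setIntegral_measure_zero _ h0]
    · obtain ⟨ω, hω⟩ := nonempty_of_measure_ne_zero h0
      have hpre : wordPrefix ω k = x := hk ▸ wordPrefix_eq_of_mem hω
      have hne : μ.real (cylinder A x) ≠ 0 := (measureReal_ne_zero_iff).2 h0
      have hne' : (μ.real (cylinder A x) : ℂ) ≠ 0 := by exact_mod_cast hne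
      have := setIntegral_cylinder_of_locConst (μ := μ) ω fun υ hυ =>
        locConst_cylAvg μ k f υ ω (mem_cylinder_wordPrefix.1 hυ)
      rw [hpre] at this
      rw [this, cylAvg, hpre, mul_inv_cancel_left₀ hne']
  | succ d ih =>
    rw [setIntegral_cylinder_eq_sum hf, setIntegral_cylinder_eq_sum
      (locConst_cylAvg μ k f).integrable]
    exact Finset.sum_congr rfl fun b _ => ih (by simp; omega) (by simp; omega)

end Cylinders

section Haar

variable {A : Matrix (Fin l) (Fin l) ℕ} {μ : Measure (SigmaA l A)}
  {θinv : List (Fin l) → ℕ → Fin l} {u : List (Fin l) → ℕ → ℕ → ℝ}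

/-- A square matrix with orthonormal columns has orthonormal rows. -/
lemma sum_mul_row_of_sum_mul_col {n : ℕ} {v : ℕ → ℕ → ℝ}
    (hv : ∀ j < n, ∀ j' < n, ∑ m ∈ Finset.range n, v m j * v m j' = if j = j' then 1 else 0)
    {m m' : ℕ} (hm : m < n) (hm' : m' < n) :
    ∑ j ∈ Finset.range n, v m j * v m' j = if m = m' then 1 else 0 := by
  let M : Matrix (Fin n) (Fin n) ℝ := fun i j => v i j
  have h : M.transpose * M = 1 := by
    ext i j
    have := hv i i.2 j j.2
    rw [← Fin.sum_univ_eq_sum_range (fun m => v m i * v m j)] at this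
    simpa only [Matrix.mul_apply, Matrix.transpose_apply, Matrix.one_apply, Fin.ext_iff] using this
  have h' : (M * M.transpose) ⟨m, hm⟩ ⟨m', hm'⟩ =
      (1 : Matrix (Fin n) (Fin n) ℝ) ⟨m, hm⟩ ⟨m', hm'⟩ := by
    rw [mul_eq_one_comm.1 h]
  rw [← Fin.sum_univ_eq_sum_range (fun j => v m j * v m' j)]
  simpa only [Matrix.mul_apply, Matrix.transpose_apply, Matrix.one_apply, Fin.ext_iff] using h'

lemma haarFun_of_notMem {x : List (Fin l)} {ω : SigmaA l A} (h : ω ∉ cylinder A x) (j : ℕ) :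
    haarFun A μ θinv u x j ω = 0 :=
  Finset.sum_eq_zero fun m _ => by
    rw [indC_of_notMem (x := child θinv x m) fun h' => h (mem_cylinder_append.1 h').1, mul_zero]

lemma haarFun_of_mem_child {x : List (Fin l)} {ω : SigmaA l A}
    (hinj : Set.InjOn (θinv x) (Set.Iio (alpha A x))) {m : ℕ} (hm : m < alpha A x)
    (h : ω ∈ cylinder A (child θinv x m)) (j : ℕ) :
    haarFun A μ θinv u x j ω
      = (((√(μ.real (cylinder A (child θinv x m))))⁻¹ * u x m j : ℝ) : ℂ) := by
  rw [haarFun, Finset.sum_eq_single_of_mem m (Finset.mem_range.2 hm), indC_of_mem h, mul_one]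
  · rfl
  · intro m' hm' hne
    rw [indC_of_notMem, mul_zero]
    intro h'
    exact hne (hinj (Finset.mem_range.1 hm') hm
      ((mem_cylinder_append.1 h').2.symm.trans (mem_cylinder_append.1 h).2))

lemma innerMu_haarFun (x : List (Fin l)) (j : ℕ) {f : SigmaA l A → ℂ} (hf : Integrable f μ) :
    innerMu A μ (haarFun A μ θinv u x j) f = ∑ m ∈ Finset.range (alpha A x),
      (((√(μ.real (cylinder A (child θinv x m))))⁻¹ * u x m j : ℝ) : ℂ) *
        ∫ ω in cylinder A (child θinv x m), f ω ∂μ := by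
  have key : ∀ ω, (starRingEnd ℂ) (haarFun A μ θinv u x j ω) * f ω
      = ∑ m ∈ Finset.range (alpha A x),
        (((√(μ.real (cylinder A (child θinv x m))))⁻¹ * u x m j : ℝ) : ℂ) *
          (cylinder A (child θinv x m)).indicator f ω := by
    intro ω
    rw [haarFun, map_sum, Finset.sum_mul]
    refine Finset.sum_congr rfl fun m _ => ?_
    rw [map_mul, Complex.conj_ofReal, mul_assoc]
    congr 1
    by_cases h : ω ∈ cylinder A (child θinv x m) <;> simp [indC, h]
  simp only [innerMu, key]
  rw [integral_finsetSum _ fun m _ =>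
    (hf.indicator (measurableSet_cylinder _)).const_mul _]
  refine Finset.sum_congr rfl fun m _ => ?_
  rw [integral_const_mul, integral_indicator (measurableSet_cylinder _)]

lemma sum_setIntegral_child {x : List (Fin l)} (hx : Admissible A x)
    (hθ : Set.BijOn (θinv x) (Set.Iio (alpha A x)) {y : Fin l | A (x.getLast hx.1) y = 1})
    {f : SigmaA l A → ℂ} (hf : Integrable f μ) :
    ∑ m ∈ Finset.range (alpha A x), ∫ ω in cylinder A (child θinv x m), f ω ∂μ
      = ∫ ω in cylinder A x, f ω ∂μ := by
  classical
  rw [setIntegral_cylinder_eq_sum hf]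
  have himg : (Finset.range (alpha A x)).image (θinv x)
      = Finset.univ.filter fun y => A (x.getLast hx.1) y = 1 := by
    apply Finset.coe_injective
    simpa using hθ.image_eq
  have hinj : Set.InjOn (θinv x) (Finset.range (alpha A x)) := by
    simpa using hθ.injOn
  have h1 := Finset.sum_image (f := fun b => ∫ ω in cylinder A (x ++ [b]), f ω ∂μ) hinj
  rw [himg] at h1
  simp only [child]
  rw [← h1]
  refine Finset.sum_subset (Finset.subset_univ _) fun b _ hb => ?_
  have : cylinder A (x ++ [b]) = ∅ := by
    rw [Set.eq_empty_iff_forall_notMem]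
    intro ω hω
    obtain ⟨h₁, h₂⟩ := mem_cylinder_append.1 hω
    refine hb (Finset.mem_filter.2 ⟨Finset.mem_univ _, ?_⟩)
    have hpos := List.length_pos_iff.2 hx.1
    rw [getLast_of_mem hx.1 h₁, ← h₂]
    convert ω.2 (x.length - 1) using 3
    omega
  rw [this, Measure.restrict_empty, integral_zero_measure]

/-- The Haar functions at `x` span the martingale difference at `x`. -/
lemma sum_innerMu_haarFun_mul [IsFiniteMeasure μ] {x : List (Fin l)} (hx : Admissible A x)
    (hθ : Set.BijOn (θinv x) (Set.Iio (alpha A x)) {y : Fin l | A (x.getLast hx.1) y = 1})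
    (hu_orth : ∀ j < alpha A x, ∀ j' < alpha A x,
      ∑ m ∈ Finset.range (alpha A x), u x m j * u x m j' = if j = j' then 1 else 0)
    (hu_last : ∀ m < alpha A x, u x m (alpha A x - 1) =
        (√(μ.real (cylinder A x)))⁻¹ * √(μ.real (cylinder A (child θinv x m))))
    {f : SigmaA l A → ℂ} (hf : Integrable f μ) {ω : SigmaA l A} {m : ℕ} (hm : m < alpha A x)
    (hω : ω ∈ cylinder A (child θinv x m))
    (hpos : 0 < μ.real (cylinder A (child θinv x m))) :
    ∑ j ∈ Finset.range (alpha A x - 1),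
        innerMu A μ (haarFun A μ θinv u x j) f * haarFun A μ θinv u x j ω
      = (μ.real (cylinder A (child θinv x m)) : ℂ)⁻¹ *
          ∫ υ in cylinder A (child θinv x m), f υ ∂μ
        - (μ.real (cylinder A x) : ℂ)⁻¹ * ∫ υ in cylinder A x, f υ ∂μ := by
  set s : ℕ → ℝ := fun m => √(μ.real (cylinder A (child θinv x m))) with hs
  set I : ℕ → ℂ := fun m => ∫ υ in cylinder A (child θinv x m), f υ ∂μ with hI
  have hrow : ∀ m' < alpha A x, ∑ j ∈ Finset.range (alpha A x - 1), u x m' j * u x m j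
      = (if m' = m then 1 else 0) - (μ.real (cylinder A x))⁻¹ * (s m' * s m) := by
    intro m' hm'
    have h := sum_mul_row_of_sum_mul_col hu_orth hm' hm
    obtain ⟨n, hn⟩ : ∃ n, alpha A x = n + 1 := ⟨alpha A x - 1, by omega⟩
    have h1 := hu_last m' hm'
    have h2 := hu_last m hm
    rw [hn] at h h1 h2 ⊢
    rw [Finset.sum_range_succ] at h
    simp only [Nat.add_sub_cancel] at h1 h2 ⊢
    rw [← h, h1, h2]
    have h3 : (μ.real (cylinder A x))⁻¹
        = (√(μ.real (cylinder A x)))⁻¹ * (√(μ.real (cylinder A x)))⁻¹ := by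
      rw [← mul_inv, Real.mul_self_sqrt measureReal_nonneg]
    rw [h3]
    simp only [hs]
    ring
  have hsI : ∀ m', ((s m' : ℂ))⁻¹ * s m' * I m' = I m' := by
    intro m'
    rcases eq_or_ne (s m') 0 with h0 | h0
    · have : μ (cylinder A (child θinv x m')) = 0 := by
        rw [← measureReal_eq_zero_iff]
        exact (Real.sqrt_eq_zero measureReal_nonneg).1 h0
      simp only [hI, setIntegral_measure_zero _ this, mul_zero]
    · rw [inv_mul_cancel₀ (by exact_mod_cast h0), one_mul]
  have hsm : s m ≠ 0 := (Real.sqrt_pos.2 hpos).ne'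
  have hsm' : (s m : ℂ) ≠ 0 := by exact_mod_cast hsm
  calc _ = ∑ j ∈ Finset.range (alpha A x - 1), ∑ m' ∈ Finset.range (alpha A x),
        ((s m' : ℂ))⁻¹ * I m' * (s m : ℂ)⁻¹ * ((u x m' j * u x m j : ℝ) : ℂ) := by
        refine Finset.sum_congr rfl fun j _ => ?_
        rw [innerMu_haarFun x j hf, haarFun_of_mem_child hθ.injOn hm hω, Finset.sum_mul]
        refine Finset.sum_congr rfl fun m' _ => ?_
        simp only [hs, hI]
        push_cast
        ring
    _ = ∑ m' ∈ Finset.range (alpha A x), ((s m' : ℂ))⁻¹ * I m' * (s m : ℂ)⁻¹ *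
        (((if m' = m then 1 else 0) - (μ.real (cylinder A x))⁻¹ * (s m' * s m) : ℝ) : ℂ) := by
        rw [Finset.sum_comm]
        refine Finset.sum_congr rfl fun m' hm' => ?_
        rw [← Finset.mul_sum, ← hrow m' (Finset.mem_range.1 hm')]
        push_cast
        rfl
    _ = ∑ m' ∈ Finset.range (alpha A x),
        ((if m' = m then ((s m : ℂ))⁻¹ * (s m : ℂ)⁻¹ * I m else 0)
          - (μ.real (cylinder A x) : ℂ)⁻¹ * I m') := by
        refine Finset.sum_congr rfl fun m' _ => ?_
        rw [← hsI m']
        split_ifs with h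
        · subst h
          push_cast
          field_simp
        · push_cast
          field_simp
          ring
    _ = _ := by
        rw [Finset.sum_sub_distrib, Finset.sum_ite_eq' , if_pos (Finset.mem_range.2 hm),
          ← Finset.mul_sum, sum_setIntegral_child hx hθ hf, ← mul_inv]
        congr 3
        rw [← Complex.ofReal_mul, Real.mul_self_sqrt measureReal_nonneg]

end Haar

section Dirac

variable {A : Matrix (Fin l) (Fin l) ℕ} {μ : Measure (SigmaA l A)}
  {θinv : List (Fin l) → ℕ → Fin l} {u : List (Fin l) → ℕ → ℕ → ℝ}

/-- The conditions on the child orderings and the matrix coefficients under which the functions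
`haarFun` form a Haar basis. -/
structure IsHaarSystem (A : Matrix (Fin l) (Fin l) ℕ) (μ : Measure (SigmaA l A))
    (θinv : List (Fin l) → ℕ → Fin l) (u : List (Fin l) → ℕ → ℕ → ℝ) : Prop where
  bijOn : ∀ (x : List (Fin l)) (hx : Admissible A x),
    Set.BijOn (θinv x) (Set.Iio (alpha A x)) {y : Fin l | A (x.getLast hx.1) y = 1}
  orth : ∀ x, Admissible A x → ∀ j < alpha A x, ∀ j' < alpha A x,
    ∑ m ∈ Finset.range (alpha A x), u x m j * u x m j' = if j = j' then 1 else 0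
  last : ∀ x, Admissible A x → ∀ m < alpha A x, u x m (alpha A x - 1) =
    (√(μ.real (cylinder A x)))⁻¹ * √(μ.real (cylinder A (child θinv x m)))

/-- The eigenvalue of `D` on the martingale differences at level `k` around `ω`. -/
noncomputable def diracWeight (μ : Measure (SigmaA l A)) (k : ℕ) (ω : SigmaA l A) : ℝ :=
  if k = 0 then 1
  else ((alpha A (wordPrefix ω k) : ℝ) - 1) / μ.real (cylinder A (wordPrefix ω k))

lemma locConst_diracWeight (μ : Measure (SigmaA l A)) (k : ℕ) :
    LocConst k (diracWeight μ k) := fun ω υ h => by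
  rw [diracWeight, diracWeight, wordPrefix_congr h]

lemma IsHaarSystem.exists_child (H : IsHaarSystem A μ θinv u) (ω : SigmaA l A) (k : ℕ) :
    ∃ m < alpha A (wordPrefix ω (k + 1)),
      child θinv (wordPrefix ω (k + 1)) m = wordPrefix ω (k + 2) := by
  have hx := admissible_wordPrefix_succ ω k
  have hlast : (wordPrefix ω (k + 1)).getLast hx.1 = ω.1 k := by
    rw [getLast_of_mem hx.1 (self_mem_cylinder ω _), length_wordPrefix, Nat.add_sub_cancel]
  obtain ⟨m, hm, hm'⟩ := (H.bijOn _ hx).surjOn (a := ω.1 (k + 1)) (by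
    rw [Set.mem_ofPred_eq, hlast]; exact ω.2 k)
  exact ⟨m, hm, by rw [child, hm', wordPrefix_succ ω (k + 1)]⟩

lemma IsHaarSystem.sum_eq_cylAvg_sub [IsFiniteMeasure μ] (H : IsHaarSystem A μ θinv u)
    (hpos : ∀ (ω : SigmaA l A) k, 0 < μ.real (cylinder A (wordPrefix ω k)))
    {f : SigmaA l A → ℂ} (hf : Integrable f μ) (ω : SigmaA l A) (k : ℕ) :
    ∑ j ∈ Finset.range (alpha A (wordPrefix ω (k + 1)) - 1),
        innerMu A μ (haarFun A μ θinv u (wordPrefix ω (k + 1)) j) f *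
          haarFun A μ θinv u (wordPrefix ω (k + 1)) j ω
      = cylAvg μ (k + 2) f ω - cylAvg μ (k + 1) f ω := by
  have hx := admissible_wordPrefix_succ ω k
  obtain ⟨m, hm, hchild⟩ := H.exists_child ω k
  have h := sum_innerMu_haarFun_mul (ω := ω) hx (H.bijOn _ hx) (H.orth _ hx) (H.last _ hx) hf hm
    (by rw [hchild]; exact self_mem_cylinder ω _) (by rw [hchild]; exact hpos ω _)
  rw [h, hchild, cylAvg, cylAvg]

lemma IsHaarSystem.Dop_eq_sum [IsProbabilityMeasure μ] (H : IsHaarSystem A μ θinv u)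
    (hpos : ∀ (ω : SigmaA l A) k, 0 < μ.real (cylinder A (wordPrefix ω k)))
    {n : ℕ} {f : SigmaA l A → ℂ} (hf : LocConst (n + 1) f) (ω : SigmaA l A) :
    Dop A μ θinv u f ω = ∑ k ∈ Finset.range (n + 1),
      (diracWeight μ k ω : ℂ) * (cylAvg μ (k + 1) f ω - cylAvg μ k f ω) := by
  classical
  have hfi : Integrable f μ := hf.integrable
  have h1 : ∑ a : Fin l, (((μ (cylinder A [a])).toReal : ℂ))⁻¹ *
      innerMu A μ (indC A [a]) f * indC A [a] ω = cylAvg μ 1 f ω := by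
    have hw : wordPrefix ω 1 = [ω.1 0] := by simp [wordPrefix]
    rw [Finset.sum_eq_single_of_mem (ω.1 0) (Finset.mem_univ _), innerMu_indC, cylAvg, hw,
      indC_of_mem (by rw [← hw]; exact self_mem_cylinder ω 1), mul_one]
    · rfl
    · intro b _ hb
      rw [indC_of_notMem, mul_zero]
      intro h
      exact hb (by simpa using (h 0 (by simp)).symm)
  have h0 : innerMu A μ (indC A []) f * indC A [] ω = cylAvg μ 0 f ω := by
    rw [innerMu_indC, indC_nil, cylAvg, wordPrefix_zero, cylinder_nil]
    simp
  have h2 : ∑' y : List (Fin l), Set.indicator {y : List (Fin l) | Admissible A y}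
      (fun y => ((((alpha A y : ℝ) - 1) / (μ (cylinder A y)).toReal : ℝ) : ℂ) *
        ∑ j ∈ Finset.range (alpha A y - 1),
          innerMu A μ (haarFun A μ θinv u y j) f * haarFun A μ θinv u y j ω) y
      = ∑ k ∈ Finset.range n, (diracWeight μ (k + 1) ω : ℂ) *
          (cylAvg μ (k + 2) f ω - cylAvg μ (k + 1) f ω) := by
    have hinj : Set.InjOn (fun k => wordPrefix ω (k + 1)) (Finset.range n) := by
      intro i _ j _ hij
      have := congrArg List.length hij
      simpa [length_wordPrefix] using this
    rw [tsum_eq_sum (s := (Finset.range n).image fun k => wordPrefix ω (k + 1)),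
      Finset.sum_image hinj]
    · refine Finset.sum_congr rfl fun k _ => ?_
      rw [Set.indicator_of_mem (s := {y | Admissible A y}) (admissible_wordPrefix_succ ω k),
        H.sum_eq_cylAvg_sub hpos hfi,
        diracWeight, if_neg (Nat.succ_ne_zero k)]
      rfl
    · intro y hy
      by_cases hadm : Admissible A y
      · rw [Set.indicator_of_mem (show y ∈ {y | Admissible A y} from hadm)]
        by_cases hω : ω ∈ cylinder A y
        · obtain ⟨k, hk⟩ : ∃ k, y.length = k + 1 :=
            ⟨y.length - 1, by have := List.length_pos_iff.2 hadm.1; omega⟩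
          have hyk : y = wordPrefix ω (k + 1) := by rw [← hk, wordPrefix_eq_of_mem hω]
          have hkn : n ≤ k := by
            by_contra! hlt
            exact hy (Finset.mem_image.2 ⟨k, Finset.mem_range.2 hlt, hyk.symm⟩)
          rw [hyk, H.sum_eq_cylAvg_sub hpos hfi,
            cylAvg_eq_self (hf.mono (by omega)) (hpos ω _).ne',
            cylAvg_eq_self (hf.mono (by omega)) (hpos ω _).ne', sub_self, mul_zero]
        · rw [Finset.sum_eq_zero fun j _ => by rw [haarFun_of_notMem hω, mul_zero], mul_zero]
      · exact Set.indicator_of_notMem (s := {y | Admissible A y}) hadm _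
  rw [Dop, h1, h0, h2, Finset.sum_range_succ', add_comm]
  simp [diracWeight]

lemma cylAvg_eq_zero_of_setIntegral {k : ℕ} {f : SigmaA l A → ℂ} {ω : SigmaA l A}
    (h : ∫ υ in cylinder A (wordPrefix ω k), f υ ∂μ = 0) : cylAvg μ k f ω = 0 := by
  rw [cylAvg, h, mul_zero]

lemma locConst_weighted_difference (f : SigmaA l A → ℂ) (i : ℕ) :
    LocConst (i + 1) fun υ =>
      (diracWeight μ i υ : ℂ) * (cylAvg μ (i + 1) f υ - cylAvg μ i f υ) := by
  intro ω υ h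
  simp only [(locConst_diracWeight μ i).mono i.le_succ ω υ h,
    locConst_cylAvg μ (i + 1) f ω υ h, (locConst_cylAvg μ i f).mono i.le_succ ω υ h]

lemma cylAvg_weighted_difference [IsFiniteMeasure μ]
    (hpos : ∀ (ω : SigmaA l A) k, 0 < μ.real (cylinder A (wordPrefix ω k)))
    {n : ℕ} {f : SigmaA l A → ℂ} (hf : LocConst n f) (ω : SigmaA l A) (i k : ℕ) :
    cylAvg μ k (fun υ => (diracWeight μ i υ : ℂ) *
        (cylAvg μ (i + 1) f υ - cylAvg μ i f υ)) ω
      = if i < k then (diracWeight μ i ω : ℂ) * (cylAvg μ (i + 1) f ω - cylAvg μ i f ω)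
        else 0 := by
  split_ifs with h
  · exact cylAvg_eq_self ((locConst_weighted_difference f i).mono h) (hpos ω k).ne'
  · apply cylAvg_eq_zero_of_setIntegral
    have hw : LocConst i fun υ : SigmaA l A => (diracWeight μ i υ : ℂ) := fun ω υ h => by
      simp only [locConst_diracWeight μ i ω υ h]
    have hg : Integrable (fun υ => (diracWeight μ i υ : ℂ) * f υ) μ := by
      refine LocConst.integrable (n := max i n) fun ω υ h => ?_
      simp only [(locConst_diracWeight μ i).mono (le_max_left i n) ω υ h,
        hf.mono (le_max_right i n) ω υ h]
    have hlen : (wordPrefix ω k).length ≤ i := by rw [length_wordPrefix]; omega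
    calc _ = ∫ υ in cylinder A (wordPrefix ω k),
          (cylAvg μ (i + 1) (fun υ => (diracWeight μ i υ : ℂ) * f υ) υ
            - cylAvg μ i (fun υ => (diracWeight μ i υ : ℂ) * f υ) υ) ∂μ := by
          congr 1
          funext υ
          rw [cylAvg_mul hw, cylAvg_mul (hw.mono i.le_succ), mul_sub]
      _ = 0 := by
          rw [integral_sub (locConst_cylAvg μ _ _).integrable.integrableOn
            (locConst_cylAvg μ _ _).integrable.integrableOn,
            setIntegral_cylAvg hg (by omega), setIntegral_cylAvg hg hlen, sub_self]

/-- `D` acts on martingale differences by multiplication with `diracWeight`. -/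
lemma IsHaarSystem.cylAvg_Dop_sub [IsProbabilityMeasure μ] (H : IsHaarSystem A μ θinv u)
    (hpos : ∀ (ω : SigmaA l A) k, 0 < μ.real (cylinder A (wordPrefix ω k)))
    {n : ℕ} {f : SigmaA l A → ℂ} (hf : LocConst (n + 1) f) (ω : SigmaA l A) {k : ℕ}
    (hk : k < n + 1) :
    cylAvg μ (k + 1) (Dop A μ θinv u f) ω - cylAvg μ k (Dop A μ θinv u f) ω
      = (diracWeight μ k ω : ℂ) * (cylAvg μ (k + 1) f ω - cylAvg μ k f ω) := by
  have hlin : ∀ j, cylAvg μ j (Dop A μ θinv u f) ω = ∑ i ∈ Finset.range (n + 1),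
      if i < j then (diracWeight μ i ω : ℂ) * (cylAvg μ (i + 1) f ω - cylAvg μ i f ω)
        else 0 := by
    intro j
    rw [funext (H.Dop_eq_sum hpos hf), cylAvg, integral_finsetSum _ fun i _ =>
      (locConst_weighted_difference f i).integrable.integrableOn, Finset.mul_sum]
    refine Finset.sum_congr rfl fun i _ => ?_
    rw [← cylAvg_weighted_difference hpos hf ω i j, cylAvg]
  rw [hlin, hlin, ← Finset.sum_sub_distrib, Finset.sum_eq_single_of_mem k (Finset.mem_range.2 hk)]
  · simp
  · intro i _ hik
    rcases lt_or_gt_of_ne hik with h | h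
    · rw [if_pos (by omega), if_pos h, sub_self]
    · rw [if_neg (by omega), if_neg (by omega), sub_self]

lemma IsHaarSystem.locConst_Dop [IsProbabilityMeasure μ] (H : IsHaarSystem A μ θinv u)
    (hpos : ∀ (ω : SigmaA l A) k, 0 < μ.real (cylinder A (wordPrefix ω k)))
    {n : ℕ} {f : SigmaA l A → ℂ} (hf : LocConst (n + 1) f) :
    LocConst (n + 1) (Dop A μ θinv u f) := by
  intro ω υ h
  rw [H.Dop_eq_sum hpos hf, H.Dop_eq_sum hpos hf]
  refine Finset.sum_congr rfl fun k hk => ?_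
  exact (locConst_weighted_difference f k).mono (Finset.mem_range.1 hk) ω υ h

lemma IsHaarSystem.Dop_one [IsProbabilityMeasure μ] (H : IsHaarSystem A μ θinv u)
    (hpos : ∀ (ω : SigmaA l A) k, 0 < μ.real (cylinder A (wordPrefix ω k))) :
    Dop A μ θinv u 1 = 0 := by
  funext ω
  have h1 : LocConst 0 (1 : SigmaA l A → ℂ) := fun _ _ _ => rfl
  rw [H.Dop_eq_sum (n := 0) hpos (h1.mono (Nat.zero_le _))]
  refine Finset.sum_eq_zero fun k _ => ?_
  rw [cylAvg_eq_self (h1.mono (Nat.zero_le _)) (hpos ω _).ne',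
    cylAvg_eq_self (h1.mono (Nat.zero_le _)) (hpos ω _).ne', sub_self, mul_zero]

lemma norm_cylAvg_le [IsProbabilityMeasure μ] {f : SigmaA l A → ℂ} (hf : MemLp f 2 μ)
    (hf1 : eLpNorm f 2 μ ≤ 1) (k : ℕ) (ω : SigmaA l A) :
    ‖cylAvg μ k f ω‖ ≤ (√(μ.real (cylinder A (wordPrefix ω k))))⁻¹ := by
  set M := μ.real (cylinder A (wordPrefix ω k)) with hM
  rcases (measureReal_nonneg : 0 ≤ M).eq_or_lt with h0 | hMpos
  · rw [cylAvg, ← hM, hM.trans h0.symm]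
    simp
  have hs : 0 < √M := Real.sqrt_pos.2 hMpos
  have hsq : √M * √M = M := Real.mul_self_sqrt hMpos.le
  have hint2 : Integrable (fun υ => ‖f υ‖ ^ 2) μ := hf.integrable_norm_pow two_ne_zero
  have hint : Integrable f μ := hf.integrable (by norm_num)
  have h2 : ∫ υ, ‖f υ‖ ^ 2 ∂μ ≤ 1 := by
    have h := hf.eLpNorm_eq_integral_rpow_norm two_ne_zero ENNReal.ofNat_ne_top
    rw [h] at hf1
    have h' := ENNReal.ofReal_le_one.1 hf1
    simp only [ENNReal.toReal_ofNat, Real.rpow_two] at h'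
    have hnn : 0 ≤ ∫ υ, ‖f υ‖ ^ 2 ∂μ := integral_nonneg fun _ => by positivity
    by_contra! hgt
    exact absurd h' (not_le.2 (Real.one_lt_rpow hgt (by norm_num)))
  have hset : ∫ υ in cylinder A (wordPrefix ω k), ‖f υ‖ ^ 2 ∂μ ≤ 1 :=
    (setIntegral_le_integral hint2 (Eventually.of_forall fun _ => by positivity)).trans h2
  have hI : ∫ υ in cylinder A (wordPrefix ω k), ‖f υ‖ ∂μ ≤ √M := by
    have hle : ∫ υ in cylinder A (wordPrefix ω k), ‖f υ‖ ∂μ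
        ≤ ∫ υ in cylinder A (wordPrefix ω k), (√M / 2 * ‖f υ‖ ^ 2 + (√M)⁻¹ / 2) ∂μ := by
      refine integral_mono hint.norm.integrableOn
        ((hint2.integrableOn.const_mul _).add (integrable_const _)) fun υ => ?_
      have : √M / 2 * ‖f υ‖ ^ 2 + (√M)⁻¹ / 2 - ‖f υ‖
          = (√M)⁻¹ / 2 * (√M * ‖f υ‖ - 1) ^ 2 := by
        field_simp
        ring
      have h3 : 0 ≤ (√M)⁻¹ / 2 * (√M * ‖f υ‖ - 1) ^ 2 := by positivity
      simp only
      linarith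
    rw [integral_add (hint2.integrableOn.const_mul _) (integrable_const _),
      integral_const_mul, setIntegral_const, ← hM, smul_eq_mul] at hle
    have h4 : M * ((√M)⁻¹ / 2) = √M / 2 := by
      nth_rewrite 1 [← hsq]
      field_simp
    have h5 := mul_le_mul_of_nonneg_left hset (by positivity : 0 ≤ √M / 2)
    linarith
  have hn := (norm_integral_le_integral_norm (μ := μ.restrict (cylinder A (wordPrefix ω k))) f).trans hI
  rw [cylAvg, norm_mul, norm_inv, Complex.norm_real, Real.norm_of_nonneg hMpos.le, ← hM]
  calc M⁻¹ * _ ≤ M⁻¹ * √M := by gcongr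
    _ = (√M)⁻¹ := by
      nth_rewrite 1 [← hsq]
      field_simp

end Dirac

section Gibbs

variable {A : Matrix (Fin l) (Fin l) ℕ} {μ : Measure (SigmaA l A)}

lemma HolderCont.exists_abs_le {φ : SigmaA l A → ℝ} (hφ : HolderCont φ) :
    ∃ B : ℝ, ∀ ω, |φ ω| ≤ B := by
  rcases isEmpty_or_nonempty (SigmaA l A) with h | ⟨⟨ω₀⟩⟩
  · exact ⟨0, fun ω => (IsEmpty.false ω).elim⟩
  · obtain ⟨C, s, -, h⟩ := hφ
    refine ⟨C + |φ ω₀|, fun ω => ?_⟩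
    have h0 := h ω ω₀ 0 (by simp)
    simp only [CharP.cast_eq_zero, mul_zero, neg_zero, Real.rpow_zero, mul_one] at h0
    have := abs_sub_abs_le_abs_sub (φ ω) (φ ω₀)
    linarith

/-- Gibbs measures charge every cylinder, and pass a fixed proportion of the mass of a cylinder
to each of its children. -/
lemma IsGibbs.exists_le_measureReal_succ [IsProbabilityMeasure μ] {φ : SigmaA l A → ℝ}
    (hφ : HolderCont φ) {P : ℝ} (hG : IsGibbs φ P μ) :
    (∀ (ω : SigmaA l A) k, 0 < μ.real (cylinder A (wordPrefix ω k))) ∧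
      ∃ δ : ℝ, 0 < δ ∧ ∀ (ω : SigmaA l A) k, δ * μ.real (cylinder A (wordPrefix ω k))
        ≤ μ.real (cylinder A (wordPrefix ω (k + 1))) := by
  obtain ⟨B, hB⟩ := hφ.exists_abs_le
  obtain ⟨c, hc, h⟩ := hG
  have hc0 : 0 < c := by linarith
  have lower : ∀ (ω : SigmaA l A) k, c⁻¹ * Real.exp (birkhoff φ (k + 1) ω - (k + 1 : ℕ) * P)
      ≤ μ.real (cylinder A (wordPrefix ω (k + 1))) := fun ω k =>
    (le_div_iff₀ (Real.exp_pos _)).1 (h ω (k + 1) k.succ_pos).1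
  have upper : ∀ (ω : SigmaA l A) k, μ.real (cylinder A (wordPrefix ω k))
      ≤ c * Real.exp (birkhoff φ k ω - k * P) := by
    intro ω k
    rcases Nat.eq_zero_or_pos k with rfl | hk
    · simpa [wordPrefix_zero, cylinder_nil, birkhoff] using hc.le
    · exact (div_le_iff₀ (Real.exp_pos _)).1 (h ω k hk).2
  refine ⟨fun ω k => ?_, c⁻¹ * c⁻¹ * Real.exp (-B - |P|), by positivity, fun ω k => ?_⟩
  · cases k with
    | zero => simp [wordPrefix_zero, cylinder_nil]
    | succ k => exact lt_of_lt_of_le (by positivity) (lower ω k)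
  · have hS : birkhoff φ (k + 1) ω - (k + 1 : ℕ) * P
        = (birkhoff φ k ω - k * P) + (φ (shift^[k] ω) - P) := by
      rw [birkhoff, Finset.sum_range_succ, birkhoff]
      push_cast
      ring
    have hexp : Real.exp (-B - |P|) ≤ Real.exp (φ (shift^[k] ω) - P) := by
      apply Real.exp_le_exp.2
      have h1 := (abs_le.1 (hB (shift^[k] ω))).1
      have h2 := le_abs_self P
      linarith
    calc c⁻¹ * c⁻¹ * Real.exp (-B - |P|) * μ.real (cylinder A (wordPrefix ω k))
        ≤ c⁻¹ * c⁻¹ * Real.exp (φ (shift^[k] ω) - P) *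
          (c * Real.exp (birkhoff φ k ω - k * P)) := by
          gcongr
          exact upper ω k
      _ = c⁻¹ * Real.exp (birkhoff φ (k + 1) ω - (k + 1 : ℕ) * P) := by
          rw [hS, Real.exp_add]
          field_simp
      _ ≤ _ := lower ω k

lemma Primitive.exists_succ (hA : Primitive A) (i : Fin l) : ∃ j, A i j = 1 := by
  obtain ⟨h01, n, hn, hpos⟩ := hA
  obtain ⟨n, rfl⟩ := Nat.exists_eq_succ_of_ne_zero hn.ne'
  have h := hpos i i
  rw [pow_succ', Matrix.mul_apply] at h
  obtain ⟨b, -, hb⟩ := Finset.exists_ne_zero_of_sum_ne_zero h.ne'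
  exact ⟨b, (h01 i b).resolve_left (left_ne_zero_of_mul hb)⟩

lemma Primitive.exists_path (hA : Primitive A) (n : ℕ) {i j : Fin l} (h : 0 < (A ^ n) i j) :
    ∃ p : SigmaA l A, p.1 0 = i ∧ p.1 n = j := by
  induction n generalizing i with
  | zero =>
    have hij : i = j := by
      by_contra hne
      simp [hne] at h
    choose s hs using hA.exists_succ
    refine ⟨⟨fun k => s^[k] i, fun k => ?_⟩, rfl, hij⟩
    simp only [Function.iterate_succ_apply']
    exact hs _
  | succ n ih =>
    rw [pow_succ', Matrix.mul_apply] at h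
    obtain ⟨b, -, hb⟩ := Finset.exists_ne_zero_of_sum_ne_zero h.ne'
    obtain ⟨p, hp0, hpn⟩ := ih (Nat.pos_of_ne_zero (right_ne_zero_of_mul hb))
    have hib := (hA.1 i b).resolve_left (left_ne_zero_of_mul hb)
    refine ⟨⟨fun k => Nat.casesOn k i p.1, fun k => ?_⟩, rfl, hpn⟩
    cases k with
    | zero => simpa [hp0] using hib
    | succ k => exact p.2 k

/-- Every cylinder splits into at least two cylinders after a bounded number of steps. -/
lemma Primitive.exists_branch (hl : 2 ≤ l) (hA : Primitive A) :
    ∃ n, 0 < n ∧ ∀ (ω : SigmaA l A) k, ∃ υ : SigmaA l A,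
      (∀ i < k, υ.1 i = ω.1 i) ∧ ∃ i < k + n, υ.1 i ≠ ω.1 i := by
  obtain ⟨n, hn, hpos⟩ := hA.2
  have : Nontrivial (Fin l) := Fin.nontrivial_iff_two_le.2 hl
  refine ⟨n, hn, fun ω k => ?_⟩
  cases k with
  | zero =>
    obtain ⟨b, hb⟩ := exists_ne (ω.1 0)
    obtain ⟨p, hp, -⟩ := hA.exists_path n (hpos b b)
    exact ⟨p, by simp, 0, by omega, by rwa [hp]⟩
  | succ k =>
    obtain ⟨b, hb⟩ := exists_ne (ω.1 (k + n))
    obtain ⟨p, hp0, hpn⟩ := hA.exists_path n (hpos (ω.1 k) b)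
    refine ⟨⟨fun i => if i < k then ω.1 i else p.1 (i - k), fun i => ?_⟩, fun i hi => ?_,
      k + n, by omega, ?_⟩
    · rcases lt_trichotomy (i + 1) k with h | h | h
      · simpa [h, (Nat.lt_succ_self i).trans h] using ω.2 i
      · have h1 : i < k := by omega
        have h2 : ¬ i + 1 < k := by omega
        have h3 : i + 1 - k = 0 := by omega
        simp only [h1, h2, h3, if_true, if_false, hp0]
        rw [← h]
        exact ω.2 i
      · have h1 : ¬ i < k := by omega
        have h2 : ¬ i + 1 < k := by omega
        have h3 : i + 1 - k = i - k + 1 := by omega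
        simp only [h1, h2, h3, if_false]
        exact p.2 _
    · rcases Nat.lt_succ_iff_lt_or_eq.1 hi with h | rfl
      · simp [h]
      · simp [hp0]
    · simpa [hpn] using hb

lemma exists_summable_bound_sqrt_measureReal [IsProbabilityMeasure μ] (hl : 2 ≤ l)
    (hA : Primitive A) (hpos : ∀ (ω : SigmaA l A) k, 0 < μ.real (cylinder A (wordPrefix ω k)))
    {δ : ℝ} (hδ : 0 < δ)
    (hδ' : ∀ (ω : SigmaA l A) k, δ * μ.real (cylinder A (wordPrefix ω k))
        ≤ μ.real (cylinder A (wordPrefix ω (k + 1)))) :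
    ∃ b : ℕ → ℝ, Summable b ∧ (∀ k, 0 ≤ b k) ∧
      ∀ (ω : SigmaA l A) k, √(μ.real (cylinder A (wordPrefix ω k))) ≤ b k := by
  obtain ⟨n, hn, hbranch⟩ := hA.exists_branch hl
  have hpow : ∀ (ω : SigmaA l A) k j, δ ^ j * μ.real (cylinder A (wordPrefix ω k))
      ≤ μ.real (cylinder A (wordPrefix ω (k + j))) := by
    intro ω k j
    induction j with
    | zero => simp
    | succ j ih =>
      calc _ = δ * (δ ^ j * μ.real (cylinder A (wordPrefix ω k))) := by ring
        _ ≤ δ * μ.real (cylinder A (wordPrefix ω (k + j))) := by gcongr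
        _ ≤ _ := hδ' ω (k + j)
  have hstep : ∀ (ω : SigmaA l A) k, μ.real (cylinder A (wordPrefix ω (k + n)))
      ≤ (1 - δ ^ n) * μ.real (cylinder A (wordPrefix ω k)) := by
    intro ω k
    obtain ⟨υ, hυ, i, hi, hne⟩ := hbranch ω k
    have hdisj : Disjoint (cylinder A (wordPrefix ω (k + n)))
        (cylinder A (wordPrefix υ (k + n))) := Set.disjoint_left.2 fun τ h h' => hne <|
      (mem_cylinder_wordPrefix.1 h' i hi).symm.trans (mem_cylinder_wordPrefix.1 h i hi)
    have hsub : cylinder A (wordPrefix ω (k + n)) ∪ cylinder A (wordPrefix υ (k + n))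
        ⊆ cylinder A (wordPrefix ω k) := by
      refine Set.union_subset (cylinder_wordPrefix_subset ω (Nat.le_add_right k n)) ?_
      rw [← wordPrefix_congr hυ]
      exact cylinder_wordPrefix_subset υ (Nat.le_add_right k n)
    have h1 := measureReal_mono (μ := μ) hsub
    rw [measureReal_union hdisj (measurableSet_cylinder _)] at h1
    have h2 := hpow υ k n
    rw [wordPrefix_congr hυ] at h2
    linarith
  obtain ⟨ω₀⟩ : Nonempty (SigmaA l A) := nonempty_of_isProbabilityMeasure μ
  set q := 1 - δ ^ n with hq
  have hq1 : q < 1 := by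
    have : 0 < δ ^ n := by positivity
    linarith
  have hq0 : 0 < q := pos_of_mul_pos_left ((hpos ω₀ _).trans_le (hstep ω₀ 0))
    (hpos ω₀ 0).le
  have hdecay : ∀ (ω : SigmaA l A) i j,
      μ.real (cylinder A (wordPrefix ω (n * j + i))) ≤ q ^ j := by
    intro ω i j
    induction j with
    | zero => simp
    | succ j ih =>
      calc _ = μ.real (cylinder A (wordPrefix ω ((n * j + i) + n))) := by
            congr 3; ring
        _ ≤ q * μ.real (cylinder A (wordPrefix ω (n * j + i))) := hstep ω _
        _ ≤ q * q ^ j := by gcongr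
        _ = q ^ (j + 1) := by ring
  set s := √q with hs
  have hs0 : 0 < s := Real.sqrt_pos.2 hq0
  have hs1 : s < 1 := by rw [hs, Real.sqrt_lt' one_pos]; simpa using hq1
  set r := s ^ ((n : ℝ)⁻¹) with hr
  have hr0 : 0 < r := Real.rpow_pos_of_pos hs0 _
  have hr1 : r < 1 := Real.rpow_lt_one hs0.le hs1 (by positivity)
  have hrn : r ^ n = s := Real.rpow_inv_natCast_pow hs0.le hn.ne'
  refine ⟨fun k => s⁻¹ * r ^ k, (summable_geometric_of_lt_one hr0.le hr1).mul_left _,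
    fun k => by positivity, fun ω k => ?_⟩
  have hk := hdecay ω (k % n) (k / n)
  rw [Nat.div_add_mod] at hk
  calc √(μ.real (cylinder A (wordPrefix ω k))) ≤ √(q ^ (k / n)) := Real.sqrt_le_sqrt hk
    _ = s ^ (k / n) := by rw [hs, Real.sqrt_eq_iff_mul_self_eq (by positivity) (by positivity),
          ← mul_pow, Real.mul_self_sqrt hq0.le]
    _ = s⁻¹ * (r ^ (n * (k / n)) * r ^ n) := by
        rw [pow_mul, hrn]; field_simp
    _ ≤ s⁻¹ * (r ^ (n * (k / n)) * r ^ (k % n)) := by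
        gcongr s⁻¹ * (_ * ?_)
        exact pow_le_pow_of_le_one hr0.le hr1.le (Nat.mod_lt k hn).le
    _ = s⁻¹ * r ^ k := by rw [← pow_add, Nat.div_add_mod]

end Gibbs

section Estimates

variable {A : Matrix (Fin l) (Fin l) ℕ} {μ : Measure (SigmaA l A)}
  {θinv : List (Fin l) → ℕ → Fin l} {u : List (Fin l) → ℕ → ℕ → ℝ}

lemma IsHaarSystem.norm_cylAvg_sub_le [IsProbabilityMeasure μ] (H : IsHaarSystem A μ θinv u)
    (hpos : ∀ (ω : SigmaA l A) k, 0 < μ.real (cylinder A (wordPrefix ω k)))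
    {δ : ℝ} (hδ : 0 < δ)
    (hδ' : ∀ (ω : SigmaA l A) k, δ * μ.real (cylinder A (wordPrefix ω k))
        ≤ μ.real (cylinder A (wordPrefix ω (k + 1))))
    {n : ℕ} {f : SigmaA l A → ℂ} (hf : LocConst (n + 1) f)
    (hD : eLpNorm (Dop A μ θinv u f) 2 μ ≤ 1) (ω : SigmaA l A) (k : ℕ) :
    ‖cylAvg μ (k + 1) f ω - cylAvg μ k f ω‖
      ≤ 2 * (√δ)⁻¹ * √(μ.real (cylinder A (wordPrefix ω k))) := by
  rcases Nat.lt_or_ge k (n + 1) with hk | hk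
  swap
  · rw [cylAvg_eq_self (hf.mono (by omega)) (hpos ω _).ne',
      cylAvg_eq_self (hf.mono hk) (hpos ω _).ne', sub_self, norm_zero]
    positivity
  have hmem : MemLp (Dop A μ θinv u f) 2 μ := (H.locConst_Dop hpos hf).memLp 2
  set M := μ.real (cylinder A (wordPrefix ω k)) with hM
  have hMpos : 0 < M := hpos ω k
  have hs : 0 < √M := Real.sqrt_pos.2 hMpos
  have hsδ : 0 < √δ := Real.sqrt_pos.2 hδ
  have hdiff : ‖(diracWeight μ k ω : ℂ) * (cylAvg μ (k + 1) f ω - cylAvg μ k f ω)‖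
      ≤ 2 * ((√δ)⁻¹ * (√M)⁻¹) := by
    rw [← H.cylAvg_Dop_sub hpos hf ω hk]
    have hmono : μ.real (cylinder A (wordPrefix ω (k + 1))) ≤ M :=
      measureReal_mono (cylinder_wordPrefix_subset ω k.le_succ)
    have h1 : (√(μ.real (cylinder A (wordPrefix ω (k + 1)))))⁻¹ ≤ (√δ)⁻¹ * (√M)⁻¹ := by
      rw [← mul_inv, ← Real.sqrt_mul hδ.le]
      have : 0 < √(δ * M) := Real.sqrt_pos.2 (by positivity)
      exact inv_anti₀ this (Real.sqrt_le_sqrt (hδ' ω k))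
    have h2 : (√M)⁻¹ ≤ (√(μ.real (cylinder A (wordPrefix ω (k + 1)))))⁻¹ :=
      inv_anti₀ (Real.sqrt_pos.2 (hpos ω _)) (Real.sqrt_le_sqrt hmono)
    have h3 := norm_sub_le (cylAvg μ (k + 1) (Dop A μ θinv u f) ω)
      (cylAvg μ k (Dop A μ θinv u f) ω)
    have h4 := norm_cylAvg_le hmem hD (k + 1) ω
    have h5 := norm_cylAvg_le hmem hD k ω
    linarith
  have hweight : cylAvg μ (k + 1) f ω - cylAvg μ k f ω = 0 ∨ M⁻¹ ≤ diracWeight μ k ω := by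
    cases k with
    | zero =>
      right
      have : M = 1 := by simp [hM, wordPrefix_zero, cylinder_nil]
      simp [this, diracWeight]
    | succ k =>
      obtain ⟨m, hm, -⟩ := H.exists_child ω k
      rcases Nat.lt_or_ge 1 (alpha A (wordPrefix ω (k + 1))) with h | h
      · right
        have h2 : (2 : ℝ) ≤ alpha A (wordPrefix ω (k + 1)) := by exact_mod_cast h
        rw [diracWeight, if_neg k.succ_ne_zero, ← hM, inv_eq_one_div]
        gcongr
        linarith
      · left
        rw [← H.sum_eq_cylAvg_sub hpos hf.integrable ω k, Nat.sub_eq_zero_of_le h,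
          Finset.sum_range_zero]
  rcases hweight with h0 | hw
  · rw [h0, norm_zero]
    positivity
  · have hw0 : 0 < diracWeight μ k ω := lt_of_lt_of_le (by positivity) hw
    rw [norm_mul, Complex.norm_real, Real.norm_of_nonneg hw0.le] at hdiff
    have h1 : M⁻¹ * ‖cylAvg μ (k + 1) f ω - cylAvg μ k f ω‖ ≤ 2 * ((√δ)⁻¹ * (√M)⁻¹) :=
      (mul_le_mul_of_nonneg_right hw (norm_nonneg _)).trans hdiff
    rw [inv_mul_le_iff₀ hMpos] at h1
    refine h1.trans_eq ?_
    rw [← Real.mul_self_sqrt hMpos.le, Real.sqrt_mul_self hs.le]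
    field_simp

lemma norm_cylAvg_sub_le_sum {f : SigmaA l A → ℂ} {b : ℕ → ℝ} {ω : SigmaA l A}
    (hb : ∀ k, ‖cylAvg μ (k + 1) f ω - cylAvg μ k f ω‖ ≤ b k) {i j : ℕ} (hij : i ≤ j) :
    ‖cylAvg μ j f ω - cylAvg μ i f ω‖ ≤ ∑ k ∈ Finset.Ico i j, b k := by
  rw [← Finset.sum_Ico_sub (fun k => cylAvg μ k f ω) hij]
  exact norm_sum_le_of_le _ fun k _ => hb k

/-- The functions of the first `N` letters with norm at most `R` have a finite `ε`-net. -/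
lemma exists_finite_net (N : ℕ) (R : ℝ) {ε : ℝ} (hε : 0 < ε) :
    ∃ t : Finset (SigmaA l A → ℂ), ∀ g : SigmaA l A → ℂ, LocConst N g → (∀ ω, ‖g ω‖ ≤ R) →
      ∃ b ∈ t, ∀ ω, ‖g ω - b ω‖ ≤ ε := by
  classical
  obtain ⟨F, -, hFfin, hF⟩ := Metric.finite_approx_of_totallyBounded
    (isCompact_closedBall (0 : ℂ) R).totallyBounded ε hε
  have hFfin' : Finite F := hFfin
  have : Fintype F := Fintype.ofFinite F
  let e : ((Fin N → Fin l) → Option F) → SigmaA l A → ℂ :=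
    fun c ω => ((c fun i => ω.1 i).map Subtype.val).getD 0
  refine ⟨Finset.univ.image e, fun g hg hR => ?_⟩
  have hnear : ∀ ω, ∃ z : F, ‖g ω - z‖ ≤ ε := by
    intro ω
    have := hF (show g ω ∈ Metric.closedBall (0 : ℂ) R by simpa using hR ω)
    obtain ⟨z, hz, hz'⟩ := Set.mem_iUnion₂.1 this
    exact ⟨⟨z, hz⟩, by simpa [dist_eq_norm] using (Metric.mem_ball.1 hz').le⟩
  choose z hz using hnear
  let c : (Fin N → Fin l) → Option F := fun w =>
    if h : ∃ ω : SigmaA l A, ∀ i : Fin N, ω.1 i = w i then some (z h.choose) else none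
  refine ⟨e c, Finset.mem_image_of_mem e (Finset.mem_univ c), fun ω => ?_⟩
  have h : ∃ υ : SigmaA l A, ∀ i : Fin N, υ.1 i = ω.1 i := ⟨ω, fun _ => rfl⟩
  have he : e c ω = z h.choose := by
    simp only [e, c]
    rw [dif_pos h]
    rfl
  rw [he, hg ω h.choose fun i hi => (h.choose_spec ⟨i, hi⟩).symm]
  exact hz _

end Estimates

/-- The set of `a ∈ H₀` with `∫ a dμ = 0` and `‖[D, π(a)]‖ ≤ 1` on `H₀`
is totally bounded in the supremum norm: for every `ε > 0` there is a finite `ε`-net. -/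
theorem lipschitz_ball_totallyBounded
    (hl : 2 ≤ l) (A : Matrix (Fin l) (Fin l) ℕ) (hA : Primitive A)
    (φ : SigmaA l A → ℝ) (hφ : HolderCont φ) (P : ℝ)
    (μ : Measure (SigmaA l A)) [IsProbabilityMeasure μ] (hGibbs : IsGibbs φ P μ)
    (θinv : List (Fin l) → ℕ → Fin l)
    (hθ : ∀ (x : List (Fin l)) (hx : Admissible A x),
      Set.BijOn (θinv x) (Set.Iio (alpha A x)) {y : Fin l | A (x.getLast hx.1) y = 1})
    (u : List (Fin l) → ℕ → ℕ → ℝ)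
    (hu_orth : ∀ x, Admissible A x → ∀ j < alpha A x, ∀ j' < alpha A x,
      ∑ m ∈ Finset.range (alpha A x), u x m j * u x m j' = if j = j' then 1 else 0)
    (hu_last : ∀ x, Admissible A x → ∀ m < alpha A x,
      u x m (alpha A x - 1) =
        (Real.sqrt ((μ (cylinder A x)).toReal))⁻¹ *
          Real.sqrt ((μ (cylinder A (child θinv x m))).toReal)) :
    ∀ ε : ℝ, 0 < ε → ∃ t : Finset (SigmaA l A → ℂ), ∀ a ∈ H0 A, (∫ ω, a ω ∂μ) = 0 →
      (∀ h ∈ H0 A,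
      eLpNorm (fun ω => Dop A μ θinv u (fun ω' => a ω' * h ω') ω - a ω * Dop A μ θinv u h ω) 2 μ
        ≤ eLpNorm h 2 μ) →
      ∃ b ∈ t, ∀ ω : SigmaA l A, ‖a ω - b ω‖ ≤ ε := by
  intro ε hε
  have H : IsHaarSystem A μ θinv u := ⟨hθ, hu_orth, hu_last⟩
  obtain ⟨hpos, δ, hδ, hδ'⟩ := hGibbs.exists_le_measureReal_succ hφ
  obtain ⟨b, hb, hb0, hbμ⟩ := exists_summable_bound_sqrt_measureReal hl hA hpos hδ hδ'
  set d : ℕ → ℝ := fun k => 2 * (√δ)⁻¹ * b k with hd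
  have hdsum : Summable d := hb.mul_left _
  have hd0 : ∀ k, 0 ≤ d k := fun k => mul_nonneg (by positivity) (hb0 k)
  obtain ⟨N, hN⟩ : ∃ N, ∑' k, d k - ε / 2 < ∑ k ∈ Finset.range N, d k :=
    (hdsum.hasSum.tendsto_sum_nat.eventually_const_lt (sub_lt_self _ (half_pos hε))).exists
  obtain ⟨t, ht⟩ := exists_finite_net (A := A) N (∑' k, d k) (half_pos hε)
  refine ⟨t, fun a ha hint hcomm => ?_⟩
  obtain ⟨n, hn⟩ := exists_locConst_of_mem_H0 ha
  have hD : eLpNorm (Dop A μ θinv u a) 2 μ ≤ 1 := by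
    have h1 : (1 : SigmaA l A → ℂ) ∈ H0 A :=
      Submodule.subset_span ⟨[], Or.inl rfl, indC_nil.symm⟩
    have h := hcomm 1 h1
    have hone : eLpNorm (1 : SigmaA l A → ℂ) 2 μ = 1 := by
      have := eLpNorm_const' (μ := μ) (p := 2) (1 : ℂ) two_ne_zero ENNReal.ofNat_ne_top
      rw [enorm_one, measure_univ, ENNReal.one_rpow, mul_one] at this
      exact this
    rw [hone] at h
    simpa [H.Dop_one hpos] using h
  have hstep : ∀ ω k, ‖cylAvg μ (k + 1) a ω - cylAvg μ k a ω‖ ≤ d k := fun ω k =>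
    (H.norm_cylAvg_sub_le hpos hδ hδ' (hn.mono n.le_succ) hD ω k).trans
      (mul_le_mul_of_nonneg_left (hbμ ω k) (by positivity))
  have hzero : ∀ ω, cylAvg μ 0 a ω = 0 := fun ω =>
    cylAvg_eq_zero_of_setIntegral (by
      rw [wordPrefix_zero, cylinder_nil, Measure.restrict_univ, hint])
  obtain ⟨c, hct, hc⟩ := ht (cylAvg μ N a) (locConst_cylAvg μ N a) fun ω => by
    have h := norm_cylAvg_sub_le_sum (hstep ω) (Nat.zero_le N)
    rw [hzero, sub_zero] at h
    exact h.trans (hdsum.sum_le_tsum _ fun k _ => hd0 k)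
  refine ⟨c, hct, fun ω => ?_⟩
  have htail : ‖a ω - cylAvg μ N a ω‖ ≤ ε / 2 := by
    have h := norm_cylAvg_sub_le_sum (hstep ω) (le_max_right n N)
    rw [cylAvg_eq_self (hn.mono (le_max_left n N)) (hpos ω _).ne',
      Finset.sum_Ico_eq_sub d (le_max_right n N)] at h
    have := hdsum.sum_le_tsum (Finset.range (max n N)) fun k _ => hd0 k
    linarith
  calc ‖a ω - c ω‖ ≤ ‖a ω - cylAvg μ N a ω‖ + ‖cylAvg μ N a ω - c ω‖ :=
        norm_sub_le_norm_sub_add_norm_sub _ _ _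
    _ ≤ ε / 2 + ε / 2 := add_le_add htail (hc ω)
    _ = ε := add_halves ε

end SFT
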